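/- Let D = (V, A) be a digraph and X ⊆ V a set with |out_D(X)| < |in_D(X)|. Then there is a weakly connected component of the induced subdigraph D[V ∖ X], with vertex set Y, such that |in_D(Y)| < |out_D(Y)|. -/

import Mathlib

/-!
Suppose that every weakly connected component `Y` of `D[V ∖ X]` satisfies `|out(Y)| ≤ |in(Y)|`,
and choose an injection `out(Y) → in(Y)` for each of them. An arc between `Y` and the outside of
`Y` has its other endpoint in `X`, so `in(X)` is the disjoint union of the sets `out(Y)` and
`out(X)` is the disjoint union of the sets `in(Y)`. The chosen injections therefore glue to an
injection `in(X) → out(X)`, which contradicts `|out(X)| < |in(X)|`.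
-/

/-- The set of arcs of `A` going out of the vertex set `X`. -/
def outArcs {V : Type*} (A : Set (V × V)) (X : Set V) : Set (V × V) :=
  {e ∈ A | e.1 ∈ X ∧ e.2 ∉ X}

/-- The set of arcs of `A` going into the vertex set `X`. -/
def inArcs {V : Type*} (A : Set (V × V)) (X : Set V) : Set (V × V) :=
  {e ∈ A | e.1 ∉ X ∧ e.2 ∈ X}

/-- A digraph (given by its arc set `A`) is balanced if for each vertex set the
cardinalities of the ingoing and the outgoing arcs coincide. -/
def IsBalanced {V : Type*} (A : Set (V × V)) : Prop :=
  ∀ X : Set V, Cardinal.mk (inArcs A X) = Cardinal.mk (outArcs A X)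

/-- `C` is (the arc set of) a directed cycle of the digraph with arc set `A`. -/
def IsDicycle {V : Type*} (A : Set (V × V)) (C : Set (V × V)) : Prop :=
  ∃ (n : ℕ) (f : ZMod n → V), 2 ≤ n ∧ Function.Injective f ∧
    C = {p | ∃ i : ZMod n, p = (f i, f (i + 1))} ∧ C ⊆ A

/-- `P` is a partition of the arc set `A` into dicycles. -/
def IsDicyclePartition {V : Type*} (A : Set (V × V)) (P : Set (Set (V × V))) : Prop :=
  (∀ C ∈ P, IsDicycle A C) ∧ P.PairwiseDisjoint id ∧ ⋃₀ P = A

/-- Adjacency in the underlying undirected graph of the subdigraph of `A`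
induced by the vertex set `S`. -/
def AdjOn {V : Type*} (A : Set (V × V)) (S : Set V) (u v : V) : Prop :=
  u ∈ S ∧ v ∈ S ∧ ((u, v) ∈ A ∨ (v, u) ∈ A)

/-- Reachability in the underlying undirected graph of the subdigraph of `A`
induced by the vertex set `S`. -/
def ReachOn {V : Type*} (A : Set (V × V)) (S : Set V) : V → V → Prop :=
  Relation.ReflTransGen (AdjOn A S)

/-- `Y` is the vertex set of a weakly connected component of the subdigraph of
`A` induced by the vertex set `S`. -/
def IsWeakComponent {V : Type*} (A : Set (V × V)) (S : Set V) (Y : Set V) : Prop :=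
  ∃ y ∈ S, Y = {v | ReachOn A S y v}

/-- The subdigraph of `A` induced by the vertex set `X` is weakly connected. -/
def IsWeaklyConnectedOn {V : Type*} (A : Set (V × V)) (X : Set V) : Prop :=
  X.Nonempty ∧ ∀ u ∈ X, ∀ v ∈ X, ReachOn A X u v

theorem ReachOn.symm {V : Type*} {A : Set (V × V)} {S : Set V} {u v : V}
    (h : ReachOn A S u v) : ReachOn A S v u := by
  induction h with
  | refl => exact Relation.ReflTransGen.refl
  | tail _ h ih => exact Relation.ReflTransGen.head ⟨h.2.1, h.1, h.2.2.symm⟩ ih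

theorem ReachOn.mem {V : Type*} {A : Set (V × V)} {S : Set V} {u v : V}
    (h : ReachOn A S u v) (hu : u ∈ S) : v ∈ S := by
  induction h with
  | refl => exact hu
  | tail _ h _ => exact h.2.1

theorem ReachOn.setOf_eq {V : Type*} {A : Set (V × V)} {S : Set V} {u v : V}
    (h : ReachOn A S u v) : {w | ReachOn A S u w} = {w | ReachOn A S v w} := by
  ext w
  exact ⟨fun hw => Relation.ReflTransGen.trans h.symm hw,
    fun hw => Relation.ReflTransGen.trans h hw⟩

/-- If `X` is overloaded in a loop-free digraph, then some weakly connected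
component `Y` of the subdigraph induced on the complement of `X` satisfies
`|in(Y)| < |out(Y)|`. -/
theorem exists_component_of_compl_with_more_out {V : Type*}
    (A : Set (V × V)) (hA : ∀ e ∈ A, e.1 ≠ e.2) (X : Set V)
    (hX : Cardinal.mk (outArcs A X) < Cardinal.mk (inArcs A X)) :
    ∃ Y : Set V, IsWeakComponent A Xᶜ Y ∧
      Cardinal.mk (inArcs A Y) < Cardinal.mk (outArcs A Y) := by
  by_contra! hcon
  -- The injections are taken as total maps on `V × V`, so that maps for different components
  -- can be compared without dependent types.
  have hinj : ∀ Y : Set V, ∃ f : V × V → V × V, IsWeakComponent A Xᶜ Y →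
      Set.MapsTo f (outArcs A Y) (inArcs A Y) ∧ Set.InjOn f (outArcs A Y) := by
    classical
    intro Y
    by_cases hY : IsWeakComponent A Xᶜ Y
    · obtain ⟨g⟩ := hcon Y hY
      refine ⟨fun e => if h : e ∈ outArcs A Y then g ⟨e, h⟩ else e, fun _ => ⟨?_, ?_⟩⟩
      · intro e he
        simp only [he, dite_true]
        exact (g ⟨e, he⟩).2
      · intro e he e' he' h
        simp only [he, he', dite_true] at h
        exact congrArg Subtype.val (g.injective (Subtype.ext h))
    · exact ⟨id, fun h => absurd h hY⟩
  choose f hf using hinj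
  let C : V → Set V := fun v => {w | ReachOn A Xᶜ v w}
  have hC : ∀ e ∈ inArcs A X, IsWeakComponent A Xᶜ (C e.1) := fun e he => ⟨e.1, he.2.1, rfl⟩
  have hout : ∀ e ∈ inArcs A X, e ∈ outArcs A (C e.1) := fun e he =>
    ⟨he.1, Relation.ReflTransGen.refl, fun h => h.mem he.2.1 he.2.2⟩
  have him : ∀ e ∈ inArcs A X, f (C e.1) e ∈ inArcs A (C e.1) := fun e he =>
    (hf _ (hC e he)).1 (hout e he)
  refine not_le_of_gt hX ?_
  refine Cardinal.mk_le_of_injective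
    (f := fun e : inArcs A X => (⟨f (C e.1.1) e.1, ?_⟩ : outArcs A X)) ?_
  · obtain ⟨hmem, hs, ht⟩ := him e.1 e.2
    have htX := ReachOn.mem ht e.2.2.1
    refine ⟨hmem, ?_, htX⟩
    -- A tail outside `X` would be adjacent to the head, hence in the same component.
    by_contra hsX
    exact hs (Relation.ReflTransGen.tail ht ⟨htX, hsX, Or.inr hmem⟩)
  · rintro ⟨e, he⟩ ⟨e', he'⟩ h
    have h' : f (C e.1) e = f (C e'.1) e' := congrArg Subtype.val h
    -- The head of the common image lies in the components of both tails.
    have h1 : ReachOn A Xᶜ e.1 (f (C e.1) e).2 := (him e he).2.2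
    have h2 : ReachOn A Xᶜ e'.1 (f (C e'.1) e').2 := (him e' he').2.2
    rw [← h'] at h2
    have hCC : C e.1 = C e'.1 := h1.setOf_eq.trans h2.setOf_eq.symm
    have ho' := hout e' he'
    rw [← hCC] at h' ho'
    exact Subtype.ext ((hf _ (hC e he)).2 (hout e he) ho' h')
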